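/- Let P = (P₁,…,Pₙ) be a positive regular polynomial n-tuple, n ≥ 2, and let w ∈ Δⁿ_P. Then the torus K = {z ∈ ℂⁿ : |z_j| = |w_j| for all j} is a compact subset of Δⁿ_P, its monomial hull in Δⁿ_P, namely K̂ = {ζ ∈ Δⁿ_P : |ζ^α| ≤ sup_{z∈K} |z^α| for every multi-index α ∈ ℕⁿ}, equals {ζ ∈ Δⁿ_P : |ζ_j| ≤ |w_j| for all j}, and K̂ is not closed in ℂⁿ (0 lies in the closure of K̂ but not in K̂); in particular Δⁿ_P is not monomially convex. -/

import Mathlib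

/-- The map `φ(z) = (z₁/z₂, …, z_{n−1}/zₙ, zₙ)` (0-indexed over `Fin n`). -/
noncomputable def phi {n : ℕ} (z : Fin n → ℂ) : Fin n → ℂ :=
  fun j => if h : (j : ℕ) + 1 < n then z j / z ⟨(j : ℕ) + 1, h⟩ else z j

/-- The P-triangle `Δⁿ_P`. -/
def HartogsTriangle {n : ℕ} (P : Fin n → MvPolynomial (Fin n) ℝ) : Set (Fin n → ℂ) :=
  {z | (∀ j : Fin n, 1 ≤ (j : ℕ) → z j ≠ 0) ∧
       ∀ j : Fin n, MvPolynomial.eval (fun k => ‖phi z k‖ ^ 2) (P j) < 1}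

/-- The torus through `w`. -/
def torusThrough {n : ℕ} (w : Fin n → ℂ) : Set (Fin n → ℂ) :=
  {z | ∀ j, ‖z j‖ = ‖w j‖}

/-- The monomial hull of `torusThrough w` inside `Δⁿ_P`. -/
def torusHull {n : ℕ} (P : Fin n → MvPolynomial (Fin n) ℝ) (w : Fin n → ℂ) :
    Set (Fin n → ℂ) :=
  {ζ ∈ HartogsTriangle P | ∀ α : Fin n → ℕ,
    ‖∏ j, ζ j ^ α j‖ ≤
      sSup ((fun z : Fin n → ℂ => ‖∏ j, z j ^ α j‖) '' torusThrough w)}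

theorem aux_eval_mono {n : ℕ} (p : MvPolynomial (Fin n) ℝ) (hp : ∀ d, 0 ≤ p.coeff d)
    (x y : Fin n → ℝ) (hx : ∀ k, 0 ≤ x k) (hxy : ∀ k, x k ≤ y k) :
    MvPolynomial.eval x p ≤ MvPolynomial.eval y p := by
  rw [MvPolynomial.eval_eq', MvPolynomial.eval_eq']
  refine Finset.sum_le_sum fun d _ => mul_le_mul_of_nonneg_left ?_ (hp d)
  exact Finset.prod_le_prod (fun k _ => pow_nonneg (hx k) _)
    (fun k _ => pow_le_pow_left₀ (hx k) (hxy k) _)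

theorem aux_sup {n : ℕ} (w : Fin n → ℂ) (α : Fin n → ℕ) :
    sSup ((fun z : Fin n → ℂ => ‖∏ j, z j ^ α j‖) '' torusThrough w) = ∏ j, ‖w j‖ ^ α j := by
  have : ((fun z : Fin n → ℂ => ‖∏ j, z j ^ α j‖) '' torusThrough w) = {∏ j, ‖w j‖ ^ α j} := by
    ext r
    simp only [Set.mem_image, Set.mem_singleton_iff, norm_prod, norm_pow]
    constructor
    · rintro ⟨z, hz, rfl⟩
      exact Finset.prod_congr rfl fun j _ => by rw [hz j]
    · rintro rfl
      exact ⟨w, fun j => rfl, rfl⟩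
  rw [this, csSup_singleton]

theorem aux_phi_smul {n : ℕ} (w : Fin n → ℂ) (t : ℝ) (h0 : 0 < t) (h1 : t ≤ 1) (k : Fin n) :
    ‖phi (fun j => (t : ℂ) * w j) k‖ ≤ ‖phi w k‖ := by
  have ht : (t : ℂ) ≠ 0 := by exact_mod_cast h0.ne'
  unfold phi
  split_ifs with h
  · rw [mul_div_mul_left _ _ ht]
  · rw [norm_mul, Complex.norm_real, Real.norm_of_nonneg h0.le]
    exact mul_le_of_le_one_left (norm_nonneg _) h1

/-- for `w ∈ Δⁿ_P`, the torus `K = {z : |z_j| = |w_j| ∀j}` is a compact subset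
of `Δⁿ_P`, its monomial hull in `Δⁿ_P` equals `{ζ ∈ Δⁿ_P : |ζ_j| ≤ |w_j| ∀j}`, and this hull
is not closed in `ℂⁿ` (0 lies in its closure but not in the hull); in particular `Δⁿ_P` is
not monomially convex. -/
theorem stmt5 {n : ℕ} (hn : 2 ≤ n) (P : Fin n → MvPolynomial (Fin n) ℝ)
    (hcoeff : ∀ j d, 0 ≤ (P j).coeff d)
    (hconst : ∀ j, (P j).coeff 0 = 0)
    (hlin : ∀ j k : Fin n, k ≠ j → (P j).coeff (Finsupp.single k 1) = 0)
    (hdiag : ∀ j : Fin n, 0 < (P j).coeff (Finsupp.single j 1))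
    (w : Fin n → ℂ) (hw : w ∈ HartogsTriangle P) :
    IsCompact (torusThrough w) ∧
    torusThrough w ⊆ HartogsTriangle P ∧
    torusHull P w = {ζ ∈ HartogsTriangle P | ∀ j, ‖ζ j‖ ≤ ‖w j‖} ∧
    (0 : Fin n → ℂ) ∈ closure (torusHull P w) ∧
    (0 : Fin n → ℂ) ∉ torusHull P w ∧
    ¬ IsClosed (torusHull P w) := by
  have hhull : torusHull P w = {ζ ∈ HartogsTriangle P | ∀ j, ‖ζ j‖ ≤ ‖w j‖} := by
    ext ζ
    simp only [torusHull, Set.mem_setOf_eq, aux_sup]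
    refine and_congr_right fun _ => ⟨fun h j => ?_, fun h α => ?_⟩
    · have := h (Pi.single j 1)
      simpa [norm_prod, Pi.single_apply, pow_ite, Finset.prod_ite_eq'] using this
    · rw [norm_prod]
      refine Finset.prod_le_prod (fun k _ => norm_nonneg _) (fun k _ => ?_)
      rw [norm_pow]
      exact pow_le_pow_left₀ (norm_nonneg _) (h k) _
  have hcl : (0 : Fin n → ℂ) ∈ closure (torusHull P w) := by
    rw [hhull]
    have hlim : Filter.Tendsto (fun t : ℝ => (fun j => (t : ℂ) * w j : Fin n → ℂ))
        (nhdsWithin 0 (Set.Ioi 0)) (nhds 0) := by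
      have hc : Continuous (fun t : ℝ => (fun j => (t : ℂ) * w j : Fin n → ℂ)) := by fun_prop
      have h2 := (hc.tendsto 0).mono_left (nhdsWithin_le_nhds (s := Set.Ioi 0))
      have h3 : (fun j => ((0 : ℝ) : ℂ) * w j : Fin n → ℂ) = 0 := by ext j; simp
      rwa [h3] at h2
    refine mem_closure_of_tendsto hlim ?_
    have hev : ∀ᶠ t : ℝ in nhdsWithin 0 (Set.Ioi 0), t ∈ Set.Ioc (0 : ℝ) 1 :=
      Ioc_mem_nhdsGT one_pos
    filter_upwards [hev] with t ht
    have ht0 : (t : ℂ) ≠ 0 := by exact_mod_cast ht.1.ne'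
    refine ⟨⟨fun j hj => mul_ne_zero ht0 (hw.1 j hj), fun j => ?_⟩, fun j => ?_⟩
    · refine lt_of_le_of_lt (aux_eval_mono _ (hcoeff j) _ _ (fun k => by positivity)
        fun k => ?_) (hw.2 j)
      exact pow_le_pow_left₀ (norm_nonneg _) (aux_phi_smul w t ht.1 ht.2 k) 2
    · rw [norm_mul, Complex.norm_real, Real.norm_of_nonneg ht.1.le]
      exact mul_le_of_le_one_left (norm_nonneg _) ht.2
  have hnot : (0 : Fin n → ℂ) ∉ torusHull P w := fun h => h.1.1 ⟨1, hn⟩ le_rfl rfl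
  refine ⟨?_, ?_, hhull, hcl, hnot, fun h => hnot (h.closure_eq ▸ hcl)⟩
  · have : torusThrough w = Set.pi Set.univ (fun j => Metric.sphere (0 : ℂ) ‖w j‖) := by
      ext z
      simp [torusThrough]
    rw [this]
    exact isCompact_univ_pi fun j => isCompact_sphere _ _
  · intro z hz
    have hphi : ∀ k, ‖phi z k‖ = ‖phi w k‖ := by
      intro k
      unfold phi
      split_ifs with h
      · rw [norm_div, norm_div, hz, hz]
      · exact hz k
    refine ⟨fun j hj h0 => hw.1 j hj ?_, fun j => ?_⟩
    · rw [← norm_eq_zero, ← hz j, h0, norm_zero]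
    · simp only [hphi]
      exact hw.2 j
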